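/- arXiv:1912.02266 — 2 statements merged into one kernel-verified Lean document; each statement's English description precedes it below -/
import Mathlib

section
/- Let r ≥ 3 and let I ⊆ {2,…,r−1} be a set of nonconsecutive integers (any two distinct elements of I differ by at least 2). Let β ∈ ℕ^r be the vector whose i-th coordinate is 2 if i ∈ I and 1 otherwise (that is, β = Σ_{i=1}^r α_i + Σ_{i∈I} α_i in simple-root coordinates of type A_r). Then, as polynomials in ℤ[q], Σ_{k≥0} N_k(β)·q^k = q^{|I|+1}·(1+q)^{r−1−2|I|}·(2+2q+q²)^{|I|}. -/
open Polynomial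

/-- The positive roots of the Lie algebra of type `A_r` in simple-root coordinates:
the indicator vectors `α[i,j]` of the intervals `[i,j]` for `1 ≤ i ≤ j ≤ r`
(positions are `1`-based, so position `i` corresponds to `t : Fin r` with `t.val + 1 = i`). -/
def isPosRootA (r : ℕ) (v : Fin r → ℕ) : Prop :=
  ∃ i j : ℕ, 1 ≤ i ∧ i ≤ j ∧ j ≤ r ∧
    v = fun t => if i ≤ t.val + 1 ∧ t.val + 1 ≤ j then 1 else 0

/-- `NA r k ξ` is the number of decompositions of the weight `ξ` as a sum of exactly `k`
positive roots of `A_r`, i.e. the number of `ℕ`-valued functions (with finite support)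
on the set of positive roots whose values sum to `k` and whose weighted vector sum is `ξ`. -/
noncomputable def NA (r k : ℕ) (ξ : Fin r → ℕ) : ℕ :=
  Set.ncard {m : (Fin r → ℕ) →₀ ℕ |
    (∀ v ∈ m.support, isPosRootA r v) ∧
    (m.sum fun _ n => n) = k ∧
    (m.sum fun v n => n • v) = ξ}

/-!
Where `ξ c = 1`, a Kostant partition of `ξ` has exactly one part containing `c`; once this part is
removed, the remaining ones lie on either side of `c`. The left end of the removed part interacts
only with the parts on the left and its right end only with those on the right, so that
`q * ℘_q(ξ) = ℘_q(ξ restricted to [a, c]) * ℘_q(ξ restricted to [c, b])`.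
Cutting `β` at all of its coordinates `1` leaves the blocks `(1, 1)` and `(1, 2, 1)`, whose values
are `q * (1 + q)` and `q ^ 2 * (2 + 2 * q + q ^ 2)`; there is one block `(1, 2, 1)` for each element
of `I`.
-/

open Finset (Icc Ico Ioc)

section KostantPartitions

/-- The positive roots supported on the positions `a, …, b - 1`: the pair `p` encodes the root
`α[p.1, p.2 - 1]`, the indicator of the half-open interval `[p.1, p.2)`. -/
def rootIntervals (a b : ℕ) : Finset (ℕ × ℕ) := {p ∈ Ico a b ×ˢ Ioc a b | p.1 < p.2}

/-- The positive root encoded by `p`, as an integral weight. -/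
def intervalRoot (p : ℕ × ℕ) (t : ℕ) : ℤ := if p.1 ≤ t ∧ t < p.2 then 1 else 0

/-- The coordinate at position `t` of the sum of the roots in `D`, as the number of intervals of
`D` that contain `t`. -/
def coverage (D : Multiset (ℕ × ℕ)) (t : ℕ) : ℕ := D.countP fun p => p.1 ≤ t ∧ t < p.2

/-- The Kostant partitions of the weight `ξ` restricted to the positions `a, …, b - 1`. Weights are
integral so that there are none as soon as a coordinate is negative. -/
def kostantPartitions (a b : ℕ) (ξ : ℕ → ℤ) : Finset (Multiset (ℕ × ℕ)) :=
  {D ∈ Finset.Iic (∑ p ∈ rootIntervals a b, Multiset.replicate (ξ p.1).toNat p) |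
    ∀ t ∈ Ico a b, (coverage D t : ℤ) = ξ t}

/-- The `q`-analog of Kostant's partition function of `ξ` restricted to the positions
`a, …, b - 1`, with `q = X`. -/
noncomputable def qKostant (a b : ℕ) (ξ : ℕ → ℤ) : ℤ[X] :=
  ∑ D ∈ kostantPartitions a b ξ, X ^ Multiset.card D

variable {a b c t : ℕ} {p : ℕ × ℕ} {D L R : Multiset (ℕ × ℕ)} {ξ η : ℕ → ℤ}

lemma mem_rootIntervals : p ∈ rootIntervals a b ↔ a ≤ p.1 ∧ p.1 < p.2 ∧ p.2 ≤ b := by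
  simp only [rootIntervals, Finset.mem_filter, Finset.mem_product, Finset.mem_Ico, Finset.mem_Ioc]
  omega

lemma coverage_cons : (coverage (p ::ₘ D) t : ℤ) = coverage D t + intervalRoot p t := by
  simp [coverage, intervalRoot, Multiset.countP_cons]

lemma coverage_add : coverage (L + R) t = coverage L t + coverage R t :=
  Multiset.countP_add _ _ _

lemma coverage_eq_zero_iff : coverage D t = 0 ↔ ∀ p ∈ D, ¬(p.1 ≤ t ∧ t < p.2) :=
  Multiset.countP_eq_zero

lemma coverage_eq_zero (hD : ∀ p ∈ D, p ∈ rootIntervals a b) (ht : t ∉ Ico a b) :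
    coverage D t = 0 := by
  refine coverage_eq_zero_iff.2 fun p hp => ?_
  have := mem_rootIntervals.1 (hD p hp)
  rw [Finset.mem_Ico] at ht
  omega

lemma count_le_coverage (hp : p.1 < p.2) : D.count p ≤ coverage D p.1 := by
  rw [coverage, Multiset.count, Multiset.countP_eq_card_filter, Multiset.countP_eq_card_filter]
  refine Multiset.card_le_card (Multiset.monotone_filter_right D ?_)
  rintro _ rfl
  exact ⟨le_rfl, hp⟩

lemma mem_kostantPartitions :
    D ∈ kostantPartitions a b ξ ↔
      (∀ p ∈ D, p ∈ rootIntervals a b) ∧ ∀ t ∈ Ico a b, (coverage D t : ℤ) = ξ t := by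
  rw [kostantPartitions, Finset.mem_filter, Finset.mem_Iic]
  refine and_congr_left fun hcov => ⟨fun hle p hp => ?_, fun hparts => ?_⟩
  · obtain ⟨p', hp', hpp'⟩ := Multiset.mem_sum.1 (Multiset.mem_of_le hle hp)
    rwa [Multiset.eq_of_mem_replicate hpp']
  · refine Multiset.le_iff_count.2 fun p => ?_
    by_cases hp : p ∈ D
    · obtain ⟨ha, hlt, hb⟩ := mem_rootIntervals.1 (hparts p hp)
      have hξ := hcov p.1 (Finset.mem_Ico.2 ⟨ha, by omega⟩)
      have hcount := count_le_coverage (D := D) hlt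
      simp only [Multiset.count_sum', Multiset.count_replicate, Finset.sum_ite_eq', hparts p hp,
        if_true]
      omega
    · simp [Multiset.count_eq_zero_of_notMem hp]

lemma cons_mem_kostantPartitions (hp : p ∈ rootIntervals a b) :
    p ::ₘ D ∈ kostantPartitions a b ξ ↔ D ∈ kostantPartitions a b (ξ - intervalRoot p) := by
  simp only [mem_kostantPartitions, Multiset.mem_cons, forall_eq_or_imp, hp, true_and,
    coverage_cons, Pi.sub_apply, eq_sub_iff_add_eq]

lemma qKostant_congr (h : ∀ t ∈ Ico a b, ξ t = η t) : qKostant a b ξ = qKostant a b η := by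
  refine Finset.sum_congr (Finset.ext fun D => ?_) fun _ _ => rfl
  simp only [mem_kostantPartitions]
  exact and_congr_right fun _ => forall₂_congr fun t ht => by rw [h t ht]

lemma qKostant_eq_zero (ht : t ∈ Ico a b) (hξ : ξ t < 0) : qKostant a b ξ = 0 := by
  refine Finset.sum_eq_zero fun D hD => ?_
  have := (mem_kostantPartitions.1 hD).2 t ht
  omega

lemma qKostant_self (a : ℕ) (ξ : ℕ → ℤ) : qKostant a a ξ = 1 := by
  have : kostantPartitions a a ξ = {0} := by
    ext D
    simp [mem_kostantPartitions, rootIntervals, Multiset.eq_zero_iff_forall_notMem]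
  simp [qKostant, this]

lemma qKostant_singleton {n : ℕ} (h : ξ a = n) : qKostant a (a + 1) ξ = X ^ n := by
  have hparts : rootIntervals a (a + 1) = {(a, a + 1)} := by
    ext p
    simp only [mem_rootIntervals, Finset.mem_singleton, Prod.ext_iff]
    omega
  have : kostantPartitions a (a + 1) ξ = {Multiset.replicate n (a, a + 1)} := by
    ext D
    simp only [mem_kostantPartitions, hparts, Finset.mem_singleton, Multiset.eq_replicate,
      and_comm (a := Multiset.card D = n), Nat.Ico_succ_singleton, forall_eq, h, Nat.cast_inj]
    refine and_congr_right fun hD => ?_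
    rw [coverage, Multiset.countP_eq_card.2 fun p hp => by simp [hD p hp]]
  simp [qKostant, this]

lemma add_mem_kostantPartitions (hac : a ≤ c) (hcb : c < b) (h : ξ c = 0)
    (hL : ∀ p ∈ L, p ∈ rootIntervals a c) (hR : ∀ p ∈ R, p ∈ rootIntervals (c + 1) b) :
    L + R ∈ kostantPartitions a b ξ ↔
      L ∈ kostantPartitions a c ξ ∧ R ∈ kostantPartitions (c + 1) b ξ := by
  have hLR : ∀ p ∈ L + R, p ∈ rootIntervals a b := by
    simp only [mem_rootIntervals, Multiset.mem_add] at hL hR ⊢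
    grind
  have hL₀ {t} (ht : c ≤ t) : coverage L t = 0 := coverage_eq_zero hL (by simp [ht])
  have hR₀ {t} (ht : t ≤ c) : coverage R t = 0 :=
    coverage_eq_zero hR (by rw [Finset.mem_Ico]; omega)
  simp only [mem_kostantPartitions, and_iff_right hL, and_iff_right hR, and_iff_right hLR,
    coverage_add, Finset.mem_Ico]
  refine ⟨fun hcov => ⟨fun t ht => ?_, fun t ht => ?_⟩, fun ⟨hcovL, hcovR⟩ t ht => ?_⟩
  · simpa [hR₀ ht.2.le] using hcov t ⟨ht.1, ht.2.trans hcb⟩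
  · simpa [hL₀ (c.le_succ.trans ht.1)] using hcov t ⟨by omega, ht.2⟩
  · rcases lt_trichotomy t c with htc | rfl | htc
    · simpa [hR₀ htc.le] using hcovL t ⟨ht.1, htc⟩
    · simp [hL₀ le_rfl, hR₀ le_rfl, h]
    · simpa [hL₀ htc.le] using hcovR t ⟨htc, ht.2⟩

lemma qKostant_eq_mul_of_eq_zero (hac : a ≤ c) (hcb : c < b) (h : ξ c = 0) :
    qKostant a b ξ = qKostant a c ξ * qKostant (c + 1) b ξ := by
  simp only [qKostant, Finset.sum_mul_sum, ← Finset.sum_product', ← pow_add]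
  have hsplit {D} (hD : D ∈ kostantPartitions a b ξ) :
      (∀ p ∈ D.filter (·.2 ≤ c), p ∈ rootIntervals a c) ∧
        ∀ p ∈ D.filter (¬ ·.2 ≤ c), p ∈ rootIntervals (c + 1) b := by
    obtain ⟨hparts, hcov⟩ := mem_kostantPartitions.1 hD
    have hc : coverage D c = 0 := by simpa [h] using hcov c (Finset.mem_Ico.2 ⟨hac, hcb⟩)
    rw [coverage_eq_zero_iff] at hc
    simp only [mem_rootIntervals, Multiset.mem_filter] at hparts ⊢
    grind
  refine Finset.sum_nbij' (fun D => (D.filter (·.2 ≤ c), D.filter (¬ ·.2 ≤ c)))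
    (fun x => x.1 + x.2) (fun D hD => ?_) (fun x hx => ?_) (fun D _ => Multiset.filter_add_not _ D)
    (fun x hx => ?_) (fun D _ => ?_)
  · obtain ⟨hL, hR⟩ := hsplit hD
    rwa [Finset.mem_product, ← add_mem_kostantPartitions hac hcb h hL hR, Multiset.filter_add_not]
  · rw [Finset.mem_product] at hx
    exact (add_mem_kostantPartitions hac hcb h (mem_kostantPartitions.1 hx.1).1
      (mem_kostantPartitions.1 hx.2).1).2 hx
  · rw [Finset.mem_product, mem_kostantPartitions, mem_kostantPartitions] at hx
    have hL : ∀ p ∈ x.1, p.2 ≤ c := fun p hp => (mem_rootIntervals.1 (hx.1.1 p hp)).2.2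
    have hR : ∀ p ∈ x.2, ¬p.2 ≤ c := fun p hp => by
      have := mem_rootIntervals.1 (hx.2.1 p hp)
      omega
    refine Prod.ext ?_ ?_ <;> dsimp only
    · rw [Multiset.filter_add, Multiset.filter_eq_self.2 hL, Multiset.filter_eq_nil.2 hR, add_zero]
    · rw [Multiset.filter_add, Multiset.filter_eq_self.2 hR,
        Multiset.filter_eq_nil.2 fun p hp => not_not.2 (hL p hp), zero_add]
  · rw [← Multiset.card_add, Multiset.filter_add_not]

lemma eq_and_eq_of_cons_eq_cons {α : Type*} {x y : α} {S T : Multiset α} (hy : y ∉ S)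
    (h : x ::ₘ S = y ::ₘ T) : x = y ∧ S = T := by
  rcases Multiset.cons_eq_cons.1 h with h | ⟨-, _, rfl, -⟩
  · exact h
  · exact absurd (Multiset.mem_cons_self _ _) hy

lemma qKostant_eq_sum_of_eq_one (hac : a ≤ c) (hcb : c < b) (h : ξ c = 1) :
    qKostant a b ξ =
      X * ∑ p ∈ Icc a c ×ˢ Ioc c b, qKostant a b (ξ - intervalRoot p) := by
  simp only [qKostant, Finset.mul_sum, ← pow_succ', Finset.sum_sigma']
  have hmem {p : ℕ × ℕ} (hp : p ∈ Icc a c ×ˢ Ioc c b) :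
      p ∈ rootIntervals a b ∧ p.1 ≤ c ∧ c < p.2 := by
    rw [Finset.mem_product, Finset.mem_Icc, Finset.mem_Ioc] at hp
    rw [mem_rootIntervals]
    omega
  have hc : c ∈ Ico a b := Finset.mem_Ico.2 ⟨hac, hcb⟩
  symm
  refine Finset.sum_nbij (fun x => x.1 ::ₘ x.2) (fun x hx => ?_) (fun x hx y hy hxy => ?_)
    (fun D hD => ?_) fun x _ => by rw [Multiset.card_cons]
  · rw [Finset.mem_sigma] at hx
    exact (cons_mem_kostantPartitions (hmem hx.1).1).2 hx.2
  · rw [Finset.mem_coe, Finset.mem_sigma] at hx hy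
    have hcov : coverage x.2 c = 0 := by
      simpa [intervalRoot, h, hmem hx.1] using (mem_kostantPartitions.1 hx.2).2 c hc
    obtain ⟨hp, hD⟩ := eq_and_eq_of_cons_eq_cons
      (fun hy' => coverage_eq_zero_iff.1 hcov y.1 hy' (hmem hy.1).2) hxy
    exact Sigma.ext hp (heq_of_eq hD)
  · obtain ⟨hparts, hcov⟩ := mem_kostantPartitions.1 hD
    have hcov' : coverage D c ≠ 0 := by
      have := hcov c hc
      omega
    obtain ⟨p, hp, hpc⟩ : ∃ p ∈ D, p.1 ≤ c ∧ c < p.2 := by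
      simpa [coverage_eq_zero_iff] using hcov'
    obtain ⟨D', rfl⟩ := Multiset.exists_cons_of_mem hp
    have hpab := mem_rootIntervals.1 (hparts p hp)
    refine ⟨⟨p, D'⟩, ?_, rfl⟩
    rw [Finset.mem_coe, Finset.mem_sigma, Finset.mem_product, Finset.mem_Icc, Finset.mem_Ioc,
      ← cons_mem_kostantPartitions (hparts p hp)]
    exact ⟨⟨⟨hpab.1, hpc.1⟩, hpc.2, hpab.2.2⟩, hD⟩

theorem qKostant_cut (hac : a ≤ c) (hcb : c < b) (h : ξ c = 1) :
    qKostant a b ξ = X * ((∑ i ∈ Icc a c, qKostant a c (ξ - intervalRoot (i, c))) *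
      ∑ j ∈ Ioc c b, qKostant (c + 1) b (ξ - intervalRoot (c + 1, j))) := by
  rw [qKostant_eq_sum_of_eq_one hac hcb h, Finset.sum_mul_sum, ← Finset.sum_product']
  refine congrArg (X * ·) (Finset.sum_congr rfl fun p hp => ?_)
  rw [Finset.mem_product, Finset.mem_Icc, Finset.mem_Ioc] at hp
  rw [qKostant_eq_mul_of_eq_zero hac hcb (by simp [intervalRoot, h, hp])]
  congr 1 <;>
  · refine qKostant_congr fun t ht => ?_
    rw [Finset.mem_Ico] at ht
    simp only [Pi.sub_apply, intervalRoot]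
    grind

lemma qKostant_right_one (hac : a ≤ c) (h : ξ c = 1) :
    qKostant a (c + 1) ξ = X * ∑ i ∈ Icc a c, qKostant a c (ξ - intervalRoot (i, c)) := by
  simp [qKostant_cut hac c.lt_succ_self h, qKostant_self]

lemma qKostant_left_one (hcb : c < b) (h : ξ c = 1) :
    qKostant c b ξ = X * ∑ j ∈ Ioc c b, qKostant (c + 1) b (ξ - intervalRoot (c + 1, j)) := by
  simp [qKostant_cut le_rfl hcb h, qKostant_self]

theorem X_mul_qKostant_eq_mul (hac : a ≤ c) (hcb : c < b) (h : ξ c = 1) :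
    X * qKostant a b ξ = qKostant a (c + 1) ξ * qKostant c b ξ := by
  rw [qKostant_cut hac hcb h, qKostant_right_one hac h, qKostant_left_one hcb h]
  ring

lemma qKostant_one_zero (h₀ : ξ a = 1) (h₁ : ξ (a + 1) = 0) : qKostant a (a + 2) ξ = X := by
  rw [qKostant_left_one (by omega) h₀, Finset.sum_Ioc_succ_top (by omega), Nat.Ioc_succ_singleton,
    Finset.sum_singleton, qKostant_singleton (n := 0) (by simp [intervalRoot, h₁]),
    qKostant_eq_zero (t := a + 1) (by simp) (by simp [intervalRoot, h₁])]
  ring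

lemma qKostant_one_one (h₀ : ξ a = 1) (h₁ : ξ (a + 1) = 1) :
    qKostant a (a + 2) ξ = X * (1 + X) := by
  rw [qKostant_left_one (by omega) h₀, Finset.sum_Ioc_succ_top (by omega), Nat.Ioc_succ_singleton,
    Finset.sum_singleton, qKostant_singleton (n := 1) (by simp [intervalRoot, h₁]),
    qKostant_singleton (n := 0) (by simp [intervalRoot, h₁])]
  ring

lemma qKostant_two_one (h₀ : ξ a = 2) (h₁ : ξ (a + 1) = 1) :
    qKostant a (a + 2) ξ = X ^ 2 * (1 + X) := by
  rw [qKostant_right_one (by omega) h₁, Finset.sum_Icc_succ_top (by omega), Finset.Icc_self,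
    Finset.sum_singleton, qKostant_singleton (n := 1) (by simp [intervalRoot, h₀]),
    qKostant_singleton (n := 2) (by simp [intervalRoot, h₀])]
  ring

lemma qKostant_one_two_one (h₀ : ξ a = 1) (h₁ : ξ (a + 1) = 2) (h₂ : ξ (a + 2) = 1) :
    qKostant a (a + 3) ξ = X ^ 2 * (2 + 2 * X + X ^ 2) := by
  rw [qKostant_left_one (by omega) h₀, Finset.sum_Ioc_succ_top (by omega),
    Finset.sum_Ioc_succ_top (by omega), Nat.Ioc_succ_singleton, Finset.sum_singleton,
    qKostant_two_one (by simp [intervalRoot, h₁]) (by simp [intervalRoot, h₂]),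
    qKostant_one_one (by simp [intervalRoot, h₁]) (by simp [intervalRoot, h₂]),
    qKostant_one_zero (by simp [intervalRoot, h₁]) (by simp [intervalRoot, h₂])]
  ring

end KostantPartitions

section NonconsecutiveWeights

/-- The weight with coordinate `2` at the positions in `I` and `1` elsewhere. -/
def doubledWeight (I : Finset ℕ) (t : ℕ) : ℤ := if t ∈ I then 2 else 1

lemma qKostant_succ {a n : ℕ} {ξ : ℕ → ℤ} (han : a ≤ n) (h₀ : ξ n = 1) (h₁ : ξ (n + 1) = 1) :
    qKostant a (n + 2) ξ = qKostant a (n + 1) ξ * (1 + X) := by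
  refine mul_left_cancel₀ X_ne_zero ?_
  rw [X_mul_qKostant_eq_mul han (by omega) h₀, qKostant_one_one h₀ h₁]
  ring

lemma qKostant_succ_succ {a n : ℕ} {ξ : ℕ → ℤ} (han : a ≤ n) (h₀ : ξ n = 1) (h₁ : ξ (n + 1) = 2)
    (h₂ : ξ (n + 2) = 1) :
    qKostant a (n + 3) ξ = qKostant a (n + 1) ξ * (X * (2 + 2 * X + X ^ 2)) := by
  refine mul_left_cancel₀ X_ne_zero ?_
  rw [X_mul_qKostant_eq_mul han (by omega) h₀, qKostant_one_two_one h₀ h₁ h₂]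
  ring

theorem exists_qKostant_doubledWeight {I : Finset ℕ} (hI : ∀ i ∈ I, 2 ≤ i)
    (hnc : ∀ i ∈ I, i + 1 ∉ I) (n : ℕ) (hn : n + 1 ∉ I) :
    ∃ d, n = 2 * Nat.count (· ∈ I) (n + 1) + d ∧
      qKostant 1 (n + 2) (doubledWeight I) =
        X ^ (Nat.count (· ∈ I) (n + 1) + 1) * (1 + X) ^ d *
          (2 + 2 * X + X ^ 2) ^ Nat.count (· ∈ I) (n + 1) := by
  have one {t : ℕ} (ht : t ∉ I) : doubledWeight I t = 1 := if_neg ht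
  have two {t : ℕ} (ht : t ∈ I) : doubledWeight I t = 2 := if_pos ht
  have count_one : Nat.count (· ∈ I) 1 = 0 := by
    rw [Nat.count_succ, Nat.count_zero, if_neg fun h => absurd (hI 0 h) (by omega)]
  induction n using Nat.strong_induction_on with
  | _ n ih =>
    rcases n with _ | n
    · exact ⟨0, by simp [count_one],
        by simp [count_one, qKostant_singleton (a := 1) (n := 1) (one hn)]⟩
    by_cases h₁ : n + 1 ∈ I
    · obtain ⟨n, rfl⟩ : ∃ m, n = m + 1 := ⟨n - 1, by have := hI _ h₁; omega⟩
      have h₀ : n + 1 ∉ I := fun h₀ => hnc _ h₀ h₁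
      obtain ⟨d, hd, hK⟩ := ih n (by omega) h₀
      have hcount : Nat.count (· ∈ I) (n + 1 + 1 + 1) = Nat.count (· ∈ I) (n + 1) + 1 := by
        rw [Nat.count_succ, if_pos h₁, Nat.count_succ _ (n + 1), if_neg h₀]
      refine ⟨d, by omega, ?_⟩
      rw [qKostant_succ_succ (by omega) (one h₀) (two h₁) (one hn), hK, hcount]
      ring
    · obtain ⟨d, hd, hK⟩ := ih n (by omega) h₁
      have hcount : Nat.count (· ∈ I) (n + 1 + 1) = Nat.count (· ∈ I) (n + 1) := by
        rw [Nat.count_succ, if_neg h₁, add_zero]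
      refine ⟨d + 1, by omega, ?_⟩
      rw [qKostant_succ (by omega) (one h₁) (one hn), hK, hcount]
      ring

end NonconsecutiveWeights

section Comparison

variable {r : ℕ}

/-- The root encoded by `p` as a simple-root coordinate vector of type `A_r`, where the index
`t : Fin r` stands for the position `t + 1`. -/
def rootVector (r : ℕ) (p : ℕ × ℕ) : Fin r → ℕ :=
  fun t => if p.1 ≤ t.val + 1 ∧ t.val + 1 < p.2 then 1 else 0

lemma bijOn_rootVector (r : ℕ) :
    Set.BijOn (rootVector r) (rootIntervals 1 (r + 1)) {v | isPosRootA r v} := by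
  refine ⟨fun p hp => ?_, fun p hp q hq hpq => ?_, ?_⟩
  · rw [Finset.mem_coe, mem_rootIntervals] at hp
    refine ⟨p.1, p.2 - 1, hp.1, by omega, by omega, funext fun t => ?_⟩
    exact if_congr (by omega) rfl rfl
  · rw [Finset.mem_coe, mem_rootIntervals] at hp hq
    have key (t : ℕ) (h₁ : 1 ≤ t) (hr : t ≤ r) :
        p.1 ≤ t ∧ t < p.2 ↔ q.1 ≤ t ∧ t < q.2 := by
      have := congrFun hpq ⟨t - 1, by omega⟩
      simp only [rootVector, Nat.sub_add_cancel h₁] at this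
      split_ifs at this <;> tauto
    have hp₁ := key p.1 (by omega) (by omega)
    have hp₂ := key (p.2 - 1) (by omega) (by omega)
    have hq₁ := key q.1 (by omega) (by omega)
    have hq₂ := key (q.2 - 1) (by omega) (by omega)
    ext <;> omega
  · rintro _ ⟨i, j, hi, hij, hj, rfl⟩
    refine ⟨(i, j + 1), ?_, funext fun t => if_congr (by simp only; omega) rfl rfl⟩
    rw [Finset.mem_coe, mem_rootIntervals]
    dsimp only
    omega

lemma bijOn_multiset_map {α β : Type*} [Nonempty α] {f : α → β} {s : Set α} {t : Set β}
    (h : Set.BijOn f s t) :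
    Set.BijOn (Multiset.map f) {D | ∀ x ∈ D, x ∈ s} {M | ∀ y ∈ M, y ∈ t} := by
  have hinv := h.invOn_invFunOn
  have hmaps := h.surjOn.mapsTo_invFunOn
  refine Set.InvOn.bijOn (f' := Multiset.map (Function.invFunOn f s))
    ⟨fun D hD => ?_, fun M hM => ?_⟩ (fun D hD => ?_) (fun M hM => ?_)
  · simp [Multiset.map_congr rfl fun x hx => hinv.1 (hD x hx)]
  · simp [Multiset.map_congr rfl fun y hy => hinv.2 (hM y hy)]
  · exact Multiset.forall_mem_map_iff.2 fun x hx => h.mapsTo (hD x hx)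
  · exact Multiset.forall_mem_map_iff.2 fun y hy => hmaps (hM y hy)

lemma sum_map_rootVector_apply (D : Multiset (ℕ × ℕ)) (t : Fin r) :
    (D.map (rootVector r)).sum t = coverage D (t + 1) := by
  induction D using Multiset.induction_on with
  | empty => simp [coverage]
  | cons p D ih => simp [ih, coverage, rootVector, Multiset.countP_cons, add_comm]

lemma NA_eq_ncard_multiset (r k : ℕ) (ξ : Fin r → ℕ) :
    NA r k ξ = {M : Multiset (Fin r → ℕ) |
      (∀ v ∈ M, isPosRootA r v) ∧ Multiset.card M = k ∧ M.sum = ξ}.ncard := by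
  rw [NA, ← Set.ncard_preimage_of_injective_subset_range
    (Multiset.toFinsupp (α := Fin r → ℕ)).symm.injective (fun M _ => EquivLike.surjective _ M)]
  congr 1
  ext m
  have hcard : Multiset.card (Finsupp.toMultiset m) = m.sum fun _ n => n :=
    Finsupp.card_toMultiset m
  simp only [Set.mem_preimage, Set.mem_ofPred_eq, ← Finsupp.mem_toMultiset, ← hcard,
    ← Finsupp.sum_toMultiset]
  rfl

lemma sum_map_rootVector_eq_iff {D : Multiset (ℕ × ℕ)} {ξ : ℕ → ℕ} :
    ((D.map (rootVector r)).sum = fun t : Fin r => ξ (t + 1)) ↔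
      ∀ t ∈ Ico 1 (r + 1), coverage D t = ξ t := by
  simp only [funext_iff, sum_map_rootVector_apply, Finset.mem_Ico]
  refine ⟨fun h t ht => ?_, fun h t => h _ (by omega)⟩
  obtain ⟨t, rfl⟩ := Nat.exists_eq_add_of_le' ht.1
  exact h ⟨t, by omega⟩

theorem coeff_qKostant (r k : ℕ) (ξ : ℕ → ℕ) :
    (qKostant 1 (r + 1) (fun t => ξ t)).coeff k = NA r k fun t => ξ (t + 1) := by
  have hbij := (bijOn_multiset_map (bijOn_rootVector r)).subset_right
    (r := {M | (∀ v ∈ M, isPosRootA r v) ∧ Multiset.card M = k ∧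
      M.sum = fun t : Fin r => ξ (t + 1)})
    fun M hM => hM.1
  rw [NA_eq_ncard_multiset, ← hbij.ncard_eq, qKostant, finsetSum_coeff]
  simp only [coeff_X_pow, Finset.sum_boole, Nat.cast_inj, ← Set.ncard_coe_finset]
  congr 1
  ext D
  have hmaps := (bijOn_multiset_map (bijOn_rootVector r)).mapsTo (x := D)
  simp only [Set.mem_inter_iff, Set.mem_preimage, Set.mem_ofPred_eq, Multiset.card_map,
    sum_map_rootVector_eq_iff, Finset.mem_coe, Finset.mem_filter, mem_kostantPartitions,
    Nat.cast_inj] at hmaps ⊢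
  grind

end Comparison

/-- Proposition 3.1: for `β = Σ α_i + Σ_{i ∈ I} α_i` with `I ⊆ {2,…,r−1}` nonconsecutive,
`℘_q(β) = q^{|I|+1} (1+q)^{r−1−2|I|} (2+2q+q²)^{|I|}` as polynomials in `ℤ[q]`. -/
theorem qAnalog_nonconsecutive_typeA (r : ℕ) (hr : 3 ≤ r) (I : Finset ℕ)
    (hI : ∀ i ∈ I, 2 ≤ i ∧ i ≤ r - 1)
    (hnc : ∀ i ∈ I, ∀ j ∈ I, i < j → i + 2 ≤ j)
    (β : Fin r → ℕ) (hβ : β = fun t => if t.val + 1 ∈ I then 2 else 1) :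
    ∀ k : ℕ, (NA r k β : ℤ) =
      ((X : ℤ[X]) ^ (I.card + 1) * (1 + X) ^ (r - 1 - 2 * I.card) *
        (2 + 2 * X + X ^ 2) ^ I.card).coeff k := by
  intro k
  obtain ⟨n, rfl⟩ : ∃ n, r = n + 1 := ⟨r - 1, by omega⟩
  have hcount : Nat.count (· ∈ I) (n + 1) = I.card := by
    rw [Nat.count_eq_card_filter_range, Finset.filter_mem_eq_inter, Finset.inter_eq_right.2]
    intro i hi
    have := hI i hi
    rw [Finset.mem_range]
    omega
  obtain ⟨d, hd, hK⟩ := exists_qKostant_doubledWeight (fun i hi => (hI i hi).1)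
    (fun i hi hi' => by have := hnc i hi _ hi' i.lt_succ_self; omega) n
    (fun hn => by have := hI _ hn; omega)
  rw [hcount] at hd hK
  have hweight : doubledWeight I = fun t => ((if t ∈ I then 2 else 1 : ℕ) : ℤ) := by
    ext t
    simp [doubledWeight]
  rw [hβ, ← coeff_qKostant (n + 1) k fun t => if t ∈ I then 2 else 1, ← hweight, hK,
    show n + 1 - 1 - 2 * I.card = d by omega]
end

section
/- Fix ℓ ≥ 0 and m ≥ ℓ. For r ≥ 2ℓ+1 and k ∈ ℕ, let N_{r,k} be the coefficient of q^k in the polynomial q^{m+1}·(1+q)^{r−1−2ℓ}·(2+2q+q²)^ℓ ∈ ℤ[q], and set μ_r = (r+1)/2 − ℓ/5 + m and σ_r = √((r−1)/4 + 3ℓ/50). Then for every x ∈ ℝ: lim_{r→∞} (Σ_{k ∈ ℕ, k ≤ μ_r + x·σ_r} N_{r,k}) / (2^{r−1−2ℓ}·5^ℓ) = (1/√(2π))·∫_{−∞}^x e^{−u²/2} du. In other words, the normalized distribution of the number of positive roots used in the decompositions converges to the standard Gaussian as r → ∞. -/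
open Polynomial Filter

/-- `Nrk ℓ m r k` is the coefficient of `q^k` in `q^{m+1} (1+q)^{r−1−2ℓ} (2+2q+q²)^ℓ`,
i.e. the number of decompositions using exactly `k` positive roots of the weight
`λ = Σ α_i + Σ_j c_{i_j} α_{i_j}` of a classical Lie algebra of rank `r`. -/
noncomputable def Nrk (ℓ m r k : ℕ) : ℤ :=
  ((X : ℤ[X]) ^ (m + 1) * (1 + X) ^ (r - 1 - 2 * ℓ) * (2 + 2 * X + X ^ 2) ^ ℓ).coeff k

/-- The mean `μ_r = (r+1)/2 − ℓ/5 + m`. -/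
noncomputable def muGen (ℓ m r : ℕ) : ℝ := ((r : ℝ) + 1) / 2 - (ℓ : ℝ) / 5 + (m : ℝ)

/-- The standard deviation `σ_r = √((r−1)/4 + 3ℓ/50)`. -/
noncomputable def sigmaGen (ℓ r : ℕ) : ℝ :=
  Real.sqrt (((r : ℝ) - 1) / 4 + 3 * (ℓ : ℝ) / 50)

/-!
Dividing a polynomial with nonnegative coefficients by its value at `1` gives the generating
function of a probability law, whose characteristic function at `t` is the polynomial evaluated at
`exp (t * I)`. The law attached to `(1 + q) ^ n * g` is thus that of a sum of `n` fair coin flips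
and an independent bounded variable, the latter being negligible at scale `√n`. Expanding the
characteristic function of a coin flip to second order and applying Lévy's theorem gives the limit.
-/

open MeasureTheory ProbabilityTheory
open scoped NNReal Topology

section CentralLimit

variable {μ : Measure ℝ}

lemma charFun_map_sub_div (a b t : ℝ) :
    charFun (μ.map fun x ↦ (x - a) / b) t =
      charFun μ (t / b) * Complex.exp (-(a * (t / b)) * Complex.I) := by
  rw [charFun_apply_real, charFun_apply_real, integral_map (by fun_prop) (by fun_prop),
    ← integral_mul_const]
  congr with x
  rw [← Complex.exp_add]
  congr 1
  push_cast
  ring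

variable [IsProbabilityMeasure μ]

lemma charFun_sub_isLittleO_sq (hμ : MemLp id 2 μ) (hmean : ∫ x, x ∂μ = 0) :
    (fun t ↦ charFun μ t - (1 - (Var[id; μ] : ℂ) * t ^ 2 / 2)) =o[𝓝 0] fun t : ℝ ↦ t ^ 2 := by
  have hvar : ∫ x, x ^ 2 ∂μ = Var[id; μ] := by
    simpa using (variance_of_integral_eq_zero aemeasurable_id hmean).symm
  have htaylor (t : ℝ) : taylorWithinEval (charFun μ) 2 Set.univ 0 t =
      1 - (Var[id; μ] : ℂ) * t ^ 2 / 2 := by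
    have := taylorWithinEval_charFun_two_zero (P := μ) aemeasurable_id (by simpa using hμ) t
    simpa [hmean, hvar] using this
  simp_rw [← htaylor]
  simpa only [sub_zero] using taylor_isLittleO_univ (x₀ := 0) (contDiff_charFun (n := 2) hμ)

lemma tendsto_charFun_pow_of_integral_eq_zero (hμ : MemLp id 2 μ) (hmean : ∫ x, x ∂μ = 0)
    {θ : ℕ → ℝ} (hθ : Tendsto θ atTop (𝓝 0)) {c : ℝ}
    (hc : Tendsto (fun n : ℕ ↦ n * θ n ^ 2) atTop (𝓝 c)) :
    Tendsto (fun n ↦ charFun μ (θ n) ^ n) atTop (𝓝 (Complex.exp (-(Var[id; μ] * c / 2)))) := by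
  set v : ℝ := Var[id; μ]
  set R : ℕ → ℂ := fun n ↦ charFun μ (θ n) - (1 - v * θ n ^ 2 / 2)
  have hR : Tendsto (fun n ↦ n * R n) atTop (𝓝 0) := by
    have hRθ : (fun n ↦ n * R n) =o[atTop] fun n ↦ n * θ n ^ 2 :=
      (Asymptotics.isBigO_of_le _ fun n ↦ by simp).mul_isLittleO
        ((charFun_sub_isLittleO_sq hμ hmean).comp_tendsto hθ)
    exact (hRθ.trans_isBigO (hc.isBigO_one ℝ)).tendsto_zero_of_tendsto tendsto_const_nhds
  have hmain : Tendsto (fun n ↦ -(v * ((n * θ n ^ 2 : ℝ) : ℂ) / 2)) atTop (𝓝 (-(v * c / 2))) :=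
    (((Complex.continuous_ofReal.tendsto c).comp hc).const_mul (v : ℂ) |>.div_const 2).neg
  have hsum : Tendsto (fun n ↦ n * (charFun μ (θ n) - 1)) atTop (𝓝 (-(v * c / 2))) := by
    rw [← zero_add (-(v * c / 2) : ℂ)]
    refine (hR.add hmain).congr fun n ↦ ?_
    simp only [R]
    push_cast
    ring
  simpa using Complex.tendsto_one_add_pow_exp_of_tendsto hsum

lemma cdf_map_sub_div (a : ℝ) {b : ℝ} (hb : 0 < b) (x : ℝ) :
    cdf (μ.map fun y ↦ (y - a) / b) x = cdf μ (a + x * b) := by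
  have hmeas : Measurable fun y ↦ (y - a) / b := by fun_prop
  have := Measure.isProbabilityMeasure_map (μ := μ) hmeas.aemeasurable
  rw [cdf_eq_real, cdf_eq_real, map_measureReal_apply hmeas measurableSet_Iic]
  congr 1 with y
  simp [div_le_iff₀ hb, add_comm]

lemma tendsto_charFun_pow_mul_exp (hμ : MemLp id 2 μ)
    {θ : ℕ → ℝ} (hθ : Tendsto θ atTop (𝓝 0)) {c : ℝ}
    (hc : Tendsto (fun n : ℕ ↦ n * θ n ^ 2) atTop (𝓝 c)) :
    Tendsto (fun n ↦ (charFun μ (θ n) * Complex.exp (-((∫ x, x ∂μ : ℝ) * θ n) * Complex.I)) ^ n)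
      atTop (𝓝 (Complex.exp (-(Var[id; μ] * c / 2)))) := by
  set μ₀ : Measure ℝ := μ.map (· - ∫ x, x ∂μ)
  have : IsProbabilityMeasure μ₀ := Measure.isProbabilityMeasure_map (by fun_prop)
  have hint : Integrable (fun x ↦ x) μ := hμ.integrable one_le_two
  have hμ₀ : MemLp id 2 μ₀ :=
    (memLp_map_measure_iff (by fun_prop) (by fun_prop)).2 (hμ.sub (memLp_const _))
  have hmean : ∫ x, x ∂μ₀ = 0 := by
    rw [integral_map (by fun_prop) (by fun_prop), integral_sub hint (integrable_const _)]
    simp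
  have hvar : Var[id; μ₀] = Var[id; μ] := by
    rw [variance_map (by fun_prop) (by fun_prop)]
    exact variance_sub_const (by fun_prop) _
  have hcharFun (t : ℝ) : charFun μ₀ t =
      charFun μ t * Complex.exp (-((∫ x, x ∂μ : ℝ) * t) * Complex.I) := by
    simpa using charFun_map_sub_div (μ := μ) (∫ x, x ∂μ) 1 t
  simpa only [hcharFun, hvar] using tendsto_charFun_pow_of_integral_eq_zero hμ₀ hmean hθ hc

lemma tendsto_cdf_of_tendsto_charFun {ρ : ℕ → Measure ℝ} [∀ n, IsProbabilityMeasure (ρ n)]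
    [NullSingletonClass μ] (h : ∀ t, Tendsto (fun n ↦ charFun (ρ n) t) atTop (𝓝 (charFun μ t)))
    (x : ℝ) : Tendsto (fun n ↦ cdf (ρ n) x) atTop (𝓝 (cdf μ x)) := by
  let P : ProbabilityMeasure ℝ := ⟨μ, inferInstance⟩
  let Q (n : ℕ) : ProbabilityMeasure ℝ := ⟨ρ n, inferInstance⟩
  have hQ : Tendsto Q atTop (𝓝 P) := ProbabilityMeasure.tendsto_iff_tendsto_charFun.2 h
  have hIic := ProbabilityMeasure.tendsto_measure_of_null_frontier_of_tendsto' hQ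
    (E := Set.Iic x) (by simp [P])
  simp only [cdf_eq_real]
  exact (ENNReal.tendsto_toReal (measure_ne_top μ _)).comp hIic

lemma tendsto_charFun_map_sub_div {ν : Measure ℝ} [IsProbabilityMeasure ν] {ρ : ℕ → Measure ℝ}
    (hρ : ∀ n t, charFun (ρ n) t = charFun μ t ^ n * charFun ν t)
    (hvar : Var[id; μ] ≠ 0) {a b : ℕ → ℝ}
    (ha : Tendsto (fun n : ℕ ↦ (n * ∫ x, x ∂μ - a n) / b n) atTop (𝓝 0))
    (hb : Tendsto b atTop atTop)
    (hb_sq : Tendsto (fun n : ℕ ↦ b n ^ 2 / n) atTop (𝓝 Var[id; μ])) (t : ℝ) :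
    Tendsto (fun n ↦ charFun ((ρ n).map fun x ↦ (x - a n) / b n) t) atTop
      (𝓝 (charFun (gaussianReal 0 1) t)) := by
  have hθ : Tendsto (fun n ↦ t / b n) atTop (𝓝 0) := hb.const_div_atTop t
  have hθ_sq : Tendsto (fun n : ℕ ↦ n * (t / b n) ^ 2) atTop (𝓝 (t ^ 2 / Var[id; μ])) := by
    refine (tendsto_const_nhds.div hb_sq hvar).congr fun n ↦ ?_
    simp [field]
  have hμ : MemLp id 2 μ := memLp_two_of_variance_ne_zero aestronglyMeasurable_id hvar
  have hpow := tendsto_charFun_pow_mul_exp hμ hθ hθ_sq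
  have hν : Tendsto (fun n ↦ charFun ν (t / b n)) atTop (𝓝 1) := by
    simpa [Function.comp_def] using (continuous_charFun (μ := ν)).tendsto 0 |>.comp hθ
  have hdrift : Tendsto (fun n : ℕ ↦
      Complex.exp (t * ((n * ∫ x, x ∂μ - a n) / b n : ℝ) * Complex.I)) atTop (𝓝 1) := by
    have hcont : Continuous fun s : ℝ ↦ Complex.exp (t * s * Complex.I) := by fun_prop
    simpa [Function.comp_def] using (hcont.tendsto 0).comp ha
  convert (hpow.mul hν).mul hdrift using 2 with n
  · rw [charFun_map_sub_div, hρ, mul_pow, ← Complex.exp_nat_mul, mul_right_comm _ (Complex.exp _),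
      mul_assoc (_ * _) (Complex.exp _), ← Complex.exp_add]
    congr 2
    push_cast
    ring
  · have hcancel : (Var[id; μ] : ℂ) * (t ^ 2 / Var[id; μ] : ℝ) = t ^ 2 := by
      rw [← Complex.ofReal_mul, mul_div_cancel₀ _ hvar, Complex.ofReal_pow]
    rw [charFun_gaussianReal, hcancel]
    simp

theorem tendsto_cdf_of_charFun_eq_pow_mul {ν : Measure ℝ} [IsProbabilityMeasure ν]
    {ρ : ℕ → Measure ℝ} [∀ n, IsProbabilityMeasure (ρ n)]
    (hρ : ∀ n t, charFun (ρ n) t = charFun μ t ^ n * charFun ν t)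
    (hvar : Var[id; μ] ≠ 0) {a b : ℕ → ℝ}
    (ha : Tendsto (fun n : ℕ ↦ (n * ∫ x, x ∂μ - a n) / b n) atTop (𝓝 0))
    (hb : Tendsto b atTop atTop)
    (hb_sq : Tendsto (fun n : ℕ ↦ b n ^ 2 / n) atTop (𝓝 Var[id; μ])) (x : ℝ) :
    Tendsto (fun n ↦ cdf (ρ n) (a n + x * b n)) atTop (𝓝 (cdf (gaussianReal 0 1) x)) := by
  have (n : ℕ) : IsProbabilityMeasure ((ρ n).map fun y ↦ (y - a n) / b n) :=
    Measure.isProbabilityMeasure_map (by fun_prop)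
  have := nullSingletonClass_gaussianReal (μ := 0) one_ne_zero
  refine (tendsto_cdf_of_tendsto_charFun
    (tendsto_charFun_map_sub_div hρ hvar ha hb hb_sq) x).congr' ?_
  filter_upwards [hb.eventually_gt_atTop 0] with n hn using cdf_map_sub_div (a n) hn x

lemma cdf_gaussianReal_zero_one (x : ℝ) :
    cdf (gaussianReal 0 1) x =
      (1 / Real.sqrt (2 * Real.pi)) * ∫ u in Set.Iic x, Real.exp (-u ^ 2 / 2) := by
  rw [cdf_eq_real, measureReal_def, gaussianReal_apply_eq_integral _ one_ne_zero,
    ENNReal.toReal_ofReal (integral_nonneg fun u ↦ gaussianPDFReal_nonneg _ _ _),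
    ← integral_const_mul]
  simp [gaussianPDFReal]

end CentralLimit

section CoeffLaw

/-- The probability law on `ℝ` with generating function `p / p(1)`: the natural number `k` has mass
`p.coeff k / p.eval 1`. For `p = 0` this is the zero measure. Coefficients are taken in `ℝ≥0` so
that no separate nonnegativity hypothesis is needed. -/
noncomputable def coeffLaw (p : ℝ≥0[X]) : Measure ℝ :=
  ∑ k ∈ p.support, (p.coeff k / p.eval 1) • Measure.dirac (k : ℝ)

variable {p : ℝ≥0[X]}

lemma eval_one_ne_zero (hp : p ≠ 0) : p.eval 1 ≠ 0 := by
  rw [eval_eq_sum, Polynomial.sum_def]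
  simpa [Finset.sum_eq_zero_iff, Polynomial.ext_iff] using hp

lemma integral_coeffLaw {E : Type*} [NormedAddCommGroup E] [NormedSpace ℝ E] [CompleteSpace E]
    (p : ℝ≥0[X]) (f : ℝ → E) :
    ∫ x, f x ∂coeffLaw p = p.sum fun k c ↦ (c / p.eval 1) • f k := by
  rw [coeffLaw, integral_finsetSum_measure fun k _ ↦
    (integrable_dirac (by simp)).smul_measure_nnreal, Polynomial.sum_def]
  simp only [integral_smul_nnreal_measure, integral_dirac]

lemma isProbabilityMeasure_coeffLaw (hp : p ≠ 0) : IsProbabilityMeasure (coeffLaw p) where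
  measure_univ := by
    have hsum : ∑ k ∈ p.support, p.coeff k / p.eval 1 = 1 := by
      rw [← Finset.sum_div, div_eq_one_iff_eq (eval_one_ne_zero hp), eval_eq_sum,
        Polynomial.sum_def]
      simp
    simp only [coeffLaw, Measure.coe_finsetSum, Finset.sum_apply, Measure.smul_apply, measure_univ,
      ENNReal.smul_def, smul_eq_mul, mul_one]
    exact_mod_cast hsum

lemma charFun_coeffLaw (p : ℝ≥0[X]) (t : ℝ) :
    charFun (coeffLaw p) t = aeval (Complex.exp (t * Complex.I)) p / (p.eval 1 : ℝ≥0) := by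
  rw [charFun_apply_real, integral_coeffLaw, aeval_eq_sum_range,
    Polynomial.sum_over_range _ (by simp), Finset.sum_div]
  refine Finset.sum_congr rfl fun k _ ↦ ?_
  rw [← Complex.exp_nat_mul]
  simp only [NNReal.smul_def, NNReal.coe_div, Complex.real_smul, Complex.ofReal_div,
    Complex.ofReal_natCast, div_mul_eq_mul_div]
  ring_nf

lemma charFun_coeffLaw_pow_mul (p g : ℝ≥0[X]) (n : ℕ) (t : ℝ) :
    charFun (coeffLaw (p ^ n * g)) t =
      charFun (coeffLaw p) t ^ n * charFun (coeffLaw g) t := by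
  simp [charFun_coeffLaw, div_pow, mul_div_mul_comm]

lemma cdf_coeffLaw (hp : p ≠ 0) (x : ℝ) :
    cdf (coeffLaw p) x = (∑' k : ℕ, if (k : ℝ) ≤ x then (p.coeff k : ℝ) else 0) / p.eval 1 := by
  have := isProbabilityMeasure_coeffLaw hp
  rw [cdf_eq_real, ← integral_indicator_one measurableSet_Iic, integral_coeffLaw,
    tsum_eq_sum (s := p.support), Polynomial.sum_def, Finset.sum_div]
  · refine Finset.sum_congr rfl fun k _ ↦ ?_
    simp [Set.indicator_apply, NNReal.smul_def, ite_div]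
  · intro k hk
    simp [notMem_support_iff.1 hk]

theorem tendsto_cdf_coeffLaw_pow_mul {p g : ℝ≥0[X]} (hg : g ≠ 0)
    (hvar : Var[id; coeffLaw p] ≠ 0) {a b : ℕ → ℝ}
    (ha : Tendsto (fun n : ℕ ↦ (n * ∫ x, x ∂coeffLaw p - a n) / b n) atTop (𝓝 0))
    (hb : Tendsto b atTop atTop)
    (hb_sq : Tendsto (fun n : ℕ ↦ b n ^ 2 / n) atTop (𝓝 Var[id; coeffLaw p])) (x : ℝ) :
    Tendsto (fun n ↦ cdf (coeffLaw (p ^ n * g)) (a n + x * b n)) atTop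
      (𝓝 (cdf (gaussianReal 0 1) x)) := by
  have hp : p ≠ 0 := by
    rintro rfl
    simp [coeffLaw] at hvar
  have := isProbabilityMeasure_coeffLaw hp
  have := isProbabilityMeasure_coeffLaw hg
  have (n : ℕ) := isProbabilityMeasure_coeffLaw (mul_ne_zero (pow_ne_zero n hp) hg)
  exact tendsto_cdf_of_charFun_eq_pow_mul (charFun_coeffLaw_pow_mul p g) hvar ha hb hb_sq x

lemma integral_coeffLaw_one_add_X (f : ℝ → ℝ) :
    ∫ x, f x ∂coeffLaw (1 + X) = (f 0 + f 1) / 2 := by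
  have hdeg : (1 + X : ℝ≥0[X]).natDegree < 2 := by compute_degree!
  rw [integral_coeffLaw, Polynomial.sum_over_range' _ (by simp) 2 hdeg]
  simp only [Finset.sum_range_succ, Finset.range_zero, Finset.sum_empty, coeff_add, coeff_one,
    coeff_X, eval_add, eval_one, eval_X, NNReal.smul_def, smul_eq_mul]
  norm_num
  ring

lemma variance_coeffLaw_one_add_X : Var[id; coeffLaw (1 + X)] = 1 / 4 := by
  rw [variance_eq_integral aemeasurable_id, integral_coeffLaw_one_add_X,
    integral_coeffLaw_one_add_X]
  norm_num

end CoeffLaw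

section DecompositionCount

/-- The part `q ^ (m + 1) * (2 + 2 * q + q ^ 2) ^ ℓ` of the generating polynomial of `Nrk` that does
not depend on the rank. It contributes an independent bounded summand to the number of roots. -/
noncomputable def rankFreeFactor (ℓ m : ℕ) : ℝ≥0[X] := X ^ (m + 1) * (2 + 2 * X + X ^ 2) ^ ℓ

lemma eval_one_rankFreeFactor (ℓ m : ℕ) : (rankFreeFactor ℓ m).eval 1 = 5 ^ ℓ := by
  simp only [rankFreeFactor, eval_mul, eval_pow, eval_add, eval_X, eval_ofNat]
  norm_num

lemma one_add_X_ne_zero : (1 + X : ℝ≥0[X]) ≠ 0 := fun h ↦ by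
  simpa using congr(eval 0 $h)

lemma rankFreeFactor_ne_zero (ℓ m : ℕ) : rankFreeFactor ℓ m ≠ 0 := fun h ↦ by
  simpa [h] using (eval_one_rankFreeFactor ℓ m).symm

lemma Nrk_add_eq_coeff (ℓ m n k : ℕ) :
    (Nrk ℓ m (n + (2 * ℓ + 1)) k : ℝ) = ((1 + X) ^ n * rankFreeFactor ℓ m).coeff k := by
  have hmap : ((X : ℤ[X]) ^ (m + 1) * (1 + X) ^ n * (2 + 2 * X + X ^ 2) ^ ℓ).map
      (Int.castRingHom ℝ) = ((1 + X) ^ n * rankFreeFactor ℓ m).map NNReal.toRealHom := by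
    simp only [rankFreeFactor, Polynomial.map_mul, Polynomial.map_pow, Polynomial.map_add,
      Polynomial.map_one, Polynomial.map_ofNat, map_X]
    ring
  rw [Nrk, show n + (2 * ℓ + 1) - 1 - 2 * ℓ = n by omega]
  simpa only [coeff_map, eq_intCast, NNReal.coe_toRealHom] using congr(coeff $hmap k)

lemma cdf_coeffLaw_one_add_X_pow_mul_rankFreeFactor (ℓ m n : ℕ) (x : ℝ) :
    cdf (coeffLaw ((1 + X) ^ n * rankFreeFactor ℓ m)) x =
      (∑' k : ℕ, if (k : ℝ) ≤ x then (Nrk ℓ m (n + (2 * ℓ + 1)) k : ℝ) else 0) /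
        (2 ^ n * 5 ^ ℓ) := by
  rw [cdf_coeffLaw (mul_ne_zero (pow_ne_zero n one_add_X_ne_zero) (rankFreeFactor_ne_zero ℓ m))]
  simp only [Nrk_add_eq_coeff, eval_mul, eval_pow, eval_add, eval_one, eval_X,
    eval_one_rankFreeFactor, one_add_one_eq_two]
  norm_cast

lemma sigmaGen_add_sq (ℓ n : ℕ) :
    sigmaGen ℓ (n + (2 * ℓ + 1)) ^ 2 = n / 4 + 14 * ℓ / 25 := by
  have hr : (((n + (2 * ℓ + 1) : ℕ) : ℝ) - 1) / 4 + 3 * ℓ / 50 = n / 4 + 14 * ℓ / 25 := by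
    push_cast
    ring
  rw [sigmaGen, hr, Real.sq_sqrt (by positivity)]

lemma tendsto_sigmaGen_add_sq_div (ℓ : ℕ) :
    Tendsto (fun n : ℕ ↦ sigmaGen ℓ (n + (2 * ℓ + 1)) ^ 2 / n) atTop (𝓝 (1 / 4)) := by
  have h : Tendsto (fun n : ℕ ↦ (1 / 4 : ℝ) + 14 * ℓ / 25 / n) atTop (𝓝 (1 / 4 + 0)) :=
    (tendsto_const_div_atTop_nhds_zero_nat _).const_add _
  rw [add_zero] at h
  refine h.congr' ?_
  filter_upwards [eventually_ne_atTop 0] with n hn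
  rw [sigmaGen_add_sq]
  field_simp

lemma tendsto_sigmaGen (ℓ : ℕ) : Tendsto (sigmaGen ℓ) atTop atTop := by
  refine Real.tendsto_sqrt_atTop.comp (tendsto_atTop_add_const_right _ _ ?_)
  exact (tendsto_atTop_add_const_right _ (-1) tendsto_natCast_atTop_atTop).atTop_div_const
    (by norm_num)

lemma tendsto_sub_muGen_add_div (ℓ m : ℕ) :
    Tendsto (fun n : ℕ ↦ (n * (1 / 2) - muGen ℓ m (n + (2 * ℓ + 1))) /
      sigmaGen ℓ (n + (2 * ℓ + 1))) atTop (𝓝 0) := by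
  have hconst (n : ℕ) : n * (1 / 2) - muGen ℓ m (n + (2 * ℓ + 1)) = -(1 + 4 * ℓ / 5 + m) := by
    rw [muGen]
    push_cast
    ring
  simp only [hconst]
  exact ((tendsto_sigmaGen ℓ).comp (tendsto_add_atTop_nat _)).const_div_atTop _

theorem gaussian_limit_nonconsecutive_general (ℓ m : ℕ) (x : ℝ) :
    Tendsto (fun r : ℕ =>
      (∑' k : ℕ, if (k : ℝ) ≤ muGen ℓ m r + x * sigmaGen ℓ r then (Nrk ℓ m r k : ℝ) else 0) /
        ((2 : ℝ) ^ (r - 1 - 2 * ℓ) * 5 ^ ℓ))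
      atTop
      (nhds ((1 / Real.sqrt (2 * Real.pi)) * ∫ u in Set.Iic x, Real.exp (-u ^ 2 / 2))) := by
  have hmean : ∫ x, x ∂coeffLaw (1 + X) = 1 / 2 := by simp [integral_coeffLaw_one_add_X]
  have hvar := variance_coeffLaw_one_add_X
  have hlim := tendsto_cdf_coeffLaw_pow_mul (rankFreeFactor_ne_zero ℓ m)
    (by norm_num [hvar]) (hmean ▸ tendsto_sub_muGen_add_div ℓ m)
    ((tendsto_sigmaGen ℓ).comp (tendsto_add_atTop_nat (2 * ℓ + 1)))
    (hvar ▸ tendsto_sigmaGen_add_sq_div ℓ) x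
  rw [← tendsto_add_atTop_iff_nat (2 * ℓ + 1), ← cdf_gaussianReal_zero_one]
  refine hlim.congr fun n ↦ ?_
  rw [cdf_coeffLaw_one_add_X_pow_mul_rankFreeFactor, Function.comp_apply,
    show n + (2 * ℓ + 1) - 1 - 2 * ℓ = n by omega]

end DecompositionCount

/-- Theorem 1.1 (Gaussian behavior): the normalized distribution of the number of
positive roots used in the decompositions of `λ` converges to the standard normal
distribution as the rank `r → ∞`. -/
theorem gaussian_limit_nonconsecutive (ℓ m : ℕ) (hm : ℓ ≤ m) (x : ℝ) :
    Tendsto (fun r : ℕ =>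
      (∑' k : ℕ, if (k : ℝ) ≤ muGen ℓ m r + x * sigmaGen ℓ r then (Nrk ℓ m r k : ℝ) else 0) /
        ((2 : ℝ) ^ (r - 1 - 2 * ℓ) * 5 ^ ℓ))
      atTop
      (nhds ((1 / Real.sqrt (2 * Real.pi)) * ∫ u in Set.Iic x, Real.exp (-u ^ 2 / 2))) :=
  gaussian_limit_nonconsecutive_general ℓ m x
end
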